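/- Let A₁,…,A_p be symmetric real n×n matrices with p ≥ 2. Set S_{αβ} = trace(AᵅAᵝ), S_α = S_{αα} = N(A_α) (the square of the Frobenius norm), and S = Σ_α S_α. Then Σ_{α,β} N(AᵅAᵝ − AᵝAᵅ) + Σ_{α,β} S_{αβ}² ≤ (3/2)·S². -/

import Mathlib

open Matrix BigOperators

/-- Squared Frobenius norm of a real matrix. -/
noncomputable def frobN {n : ℕ} (A : Matrix (Fin n) (Fin n) ℝ) : ℝ := (Aᵀ * A).trace

lemma frobN_eq {n : ℕ} (A : Matrix (Fin n) (Fin n) ℝ) : frobN A = ∑ i, ∑ j, A i j ^ 2 := by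
  unfold frobN
  simp only [Matrix.trace, Matrix.diag, Matrix.mul_apply, Matrix.transpose_apply]
  rw [Finset.sum_comm]
  simp only [sq]

lemma frobN_nonneg {n : ℕ} (A : Matrix (Fin n) (Fin n) ℝ) : 0 ≤ frobN A := by
  rw [frobN_eq]; positivity

lemma row_bound {n : ℕ} (W : Fin n → Fin n → ℝ) (h0 : ∀ i j, 0 ≤ W i j)
    (hs : ∀ i j, W i j = W j i) (hd : ∀ i, W i i = 0) (i j : Fin n) (hij : i ≠ j) :
    2 * (∑ k, W i k + ∑ k, W j k) ≤ (∑ k, ∑ l, W k l) + 2 * W i j := by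
  have h1 : ∀ k, (if k = i then ∑ l, W i l else 0) + (if k = j then ∑ l, W j l else 0)
      + (W i k + W j k) - (if k = i then W i j else 0) - (if k = j then W i j else 0)
      ≤ ∑ l, W k l := by
    intro k
    by_cases hki : k = i
    · subst hki
      simp [hij, hd, hs j k]
    · by_cases hkj : k = j
      · subst hkj
        simp [hki, hd]
      · simp only [hki, hkj, if_false]
        have : ∑ l ∈ ({i, j} : Finset (Fin n)), W k l ≤ ∑ l, W k l :=
          Finset.sum_le_sum_of_subset_of_nonneg (Finset.subset_univ _) (fun _ _ _ => h0 _ _)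
        rw [Finset.sum_pair hij, hs k i, hs k j] at this
        linarith
  have h2 := Finset.sum_le_sum (fun k (_ : k ∈ Finset.univ) => h1 k)
  simp only [Finset.sum_add_distrib, Finset.sum_sub_distrib, Finset.sum_ite_eq',
    Finset.mem_univ, if_true] at h2
  linarith

lemma graph_bound {n : ℕ} (W : Fin n → Fin n → ℝ) (h0 : ∀ i j, 0 ≤ W i j)
    (hs : ∀ i j, W i j = W j i) (hd : ∀ i, W i i = 0) (R t : ℝ)
    (hR : ∑ i, ∑ j, W i j ≤ R) (ht : 0 ≤ t) (hW : ∀ i j, i ≠ j → 2 * W i j ≤ t)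
    (x : Fin n → ℝ) :
    ∑ i, ∑ j, W i j * (x i - x j) ^ 2 ≤ (R + t) * ∑ i, x i ^ 2 := by
  set Q := ∑ i, ∑ j, W i j * (x i - x j) ^ 2 with hQ
  have hQ0 : 0 ≤ Q := Finset.sum_nonneg fun i _ => Finset.sum_nonneg fun j _ =>
    mul_nonneg (h0 i j) (sq_nonneg _)
  have hR0 : 0 ≤ R := le_trans (Finset.sum_nonneg fun i _ => Finset.sum_nonneg fun j _ => h0 i j) hR
  set L : Fin n → ℝ := fun i => 2 * ∑ j, W i j * (x i - x j) with hL
  have e1 : ∑ i, x i * L i = Q := by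
    have a1 : ∑ i, x i * L i = ∑ i, ∑ j, 2 * (W i j * (x i * (x i - x j))) := by
      refine Finset.sum_congr rfl fun i _ => ?_
      simp only [hL, Finset.mul_sum]
      refine Finset.sum_congr rfl fun j _ => by ring
    have a2 : ∑ i, x i * L i = ∑ i, ∑ j, 2 * (W i j * (x j * (x j - x i))) := by
      rw [a1, Finset.sum_comm]
      refine Finset.sum_congr rfl fun i _ => Finset.sum_congr rfl fun j _ => by rw [hs i j]
    have a3 : 2 * ∑ i, x i * L i = 2 * Q := by
      rw [two_mul]
      nth_rewrite 1 [a1]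
      rw [a2, hQ, Finset.mul_sum, ← Finset.sum_add_distrib]
      refine Finset.sum_congr rfl fun i _ => ?_
      rw [Finset.mul_sum, ← Finset.sum_add_distrib]
      refine Finset.sum_congr rfl fun j _ => by ring
    linarith
  have e2 : ∑ i, L i ^ 2 ≤ (R + t) * Q := by
    have b1 : ∀ i, L i ^ 2 ≤ ∑ j, 4 * (∑ k, W i k) * (W i j * (x i - x j) ^ 2) := by
      intro i
      rw [← Finset.mul_sum]
      have := Finset.sum_sq_le_sum_mul_sum_of_sq_le_mul Finset.univ
        (r := fun j => W i j * (x i - x j)) (f := fun j => W i j)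
        (g := fun j => W i j * (x i - x j) ^ 2) (fun j _ => h0 i j)
        (fun j _ => mul_nonneg (h0 i j) (sq_nonneg _)) (fun j _ => le_of_eq (by ring))
      simp only [hL]
      nlinarith
    have b2 : ∑ i, L i ^ 2 ≤ ∑ i, ∑ j, 4 * (∑ k, W i k) * (W i j * (x i - x j) ^ 2) :=
      Finset.sum_le_sum fun i _ => b1 i
    have b3 : ∑ i, ∑ j, 4 * (∑ k, W i k) * (W i j * (x i - x j) ^ 2)
        = ∑ i, ∑ j, 4 * (∑ k, W j k) * (W i j * (x i - x j) ^ 2) := by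
      rw [Finset.sum_comm]
      refine Finset.sum_congr rfl fun i _ => Finset.sum_congr rfl fun j _ => ?_
      rw [hs i j]; ring
    have b4 : (∑ i, ∑ j, 4 * (∑ k, W i k) * (W i j * (x i - x j) ^ 2))
        + ∑ i, ∑ j, 4 * (∑ k, W j k) * (W i j * (x i - x j) ^ 2) ≤ 2 * ((R + t) * Q) := by
      rw [hQ, ← Finset.sum_add_distrib, Finset.mul_sum, Finset.mul_sum]
      refine Finset.sum_le_sum fun i _ => ?_
      rw [← Finset.sum_add_distrib, Finset.mul_sum _ _ (R + t), Finset.mul_sum _ _ (2 : ℝ)]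
      refine Finset.sum_le_sum fun j _ => ?_
      by_cases hij : i = j
      · subst hij; simp
      · have c1 := row_bound W h0 hs hd i j hij
        have c2 := hW i j hij
        have c3 : 0 ≤ W i j * (x i - x j) ^ 2 := mul_nonneg (h0 i j) (sq_nonneg _)
        nlinarith
    linarith
  have e3 : Q ^ 2 ≤ (∑ i, x i ^ 2) * ∑ i, L i ^ 2 := by
    rw [← e1]; exact Finset.sum_mul_sq_le_sq_mul_sq _ _ _
  have hx : 0 ≤ ∑ i, x i ^ 2 := Finset.sum_nonneg fun i _ => sq_nonneg (x i)
  rcases hQ0.eq_or_lt with h | h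
  · rw [← h]; positivity
  · have : Q * Q ≤ ((R + t) * ∑ i, x i ^ 2) * Q := by nlinarith
    exact le_of_mul_le_mul_right this h

lemma bessel {n : ℕ} {ι : Type*} [DecidableEq ι] (s : Finset ι)
    (X : ι → Matrix (Fin n) (Fin n) ℝ)
    (hX : ∀ b, (X b).IsSymm) (ho : ∀ b ∈ s, ∀ c ∈ s, b ≠ c → (X b * X c).trace = 0) (t : ℝ)
    (ht : 0 ≤ t) (hb : ∀ b ∈ s, frobN (X b) ≤ t) (i j : Fin n) (hij : i ≠ j) :
    2 * ∑ b ∈ s, X b i j ^ 2 ≤ t := by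
  set C := ∑ b ∈ s, X b i j ^ 2 with hC
  have hC0 : 0 ≤ C := Finset.sum_nonneg fun _ _ => sq_nonneg _
  set Y := ∑ b ∈ s, X b i j • X b with hY
  have hYt : Yᵀ = Y := by
    simp only [hY, Matrix.transpose_sum, Matrix.transpose_smul, (hX _).eq]
  have h1 : frobN Y ≤ t * C := by
    unfold frobN
    rw [hYt, hY, Finset.sum_mul, Matrix.trace_sum, hC, Finset.mul_sum]
    refine Finset.sum_le_sum fun b hbs => ?_
    rw [Finset.mul_sum, Matrix.trace_sum, Finset.sum_eq_single_of_mem b hbs]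
    · have := hb b hbs
      unfold frobN at this
      rw [(hX b).eq] at this
      simp only [Matrix.smul_mul, Matrix.mul_smul, Matrix.trace_smul, smul_eq_mul]
      nlinarith [sq_nonneg (X b i j)]
    · intro c hc hcb
      simp [ho b hbs c hc hcb.symm]
  have h2 : Y i j = C := by
    simp only [hY, Matrix.sum_apply, Matrix.smul_apply, smul_eq_mul, hC, sq]
  have h3 : Y j i = C := by rw [← h2, ← Matrix.transpose_apply Y, hYt]
  have h4 : Y i j ^ 2 + Y j i ^ 2 ≤ frobN Y := by
    rw [frobN_eq]
    have : ∑ k ∈ ({i, j} : Finset (Fin n)), ∑ l, Y k l ^ 2 ≤ ∑ k, ∑ l, Y k l ^ 2 :=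
      Finset.sum_le_sum_of_subset_of_nonneg (Finset.subset_univ _) (fun _ _ _ => by positivity)
    rw [Finset.sum_pair hij] at this
    have h5 := Finset.single_le_sum (f := fun l => Y i l ^ 2) (fun l _ => sq_nonneg _)
      (Finset.mem_univ j)
    have h6 := Finset.single_le_sum (f := fun l => Y j l ^ 2) (fun l _ => sq_nonneg _)
      (Finset.mem_univ i)
    linarith
  rw [h2, h3] at h4
  rcases hC0.eq_or_lt with h | h
  · rw [← h]; simpa using ht
  · have : (2 * C) * C ≤ t * C := by nlinarith
    exact le_of_mul_le_mul_right this h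

lemma key_diag {n : ℕ} {ι : Type*} [DecidableEq ι] (s : Finset ι)
    (X : ι → Matrix (Fin n) (Fin n) ℝ) (x : Fin n → ℝ)
    (hX : ∀ b, (X b).IsSymm) (ho : ∀ b ∈ s, ∀ c ∈ s, b ≠ c → (X b * X c).trace = 0) (t : ℝ)
    (ht : 0 ≤ t) (hb : ∀ b ∈ s, frobN (X b) ≤ t) :
    ∑ b ∈ s, frobN (diagonal x * X b - X b * diagonal x)
      ≤ frobN (diagonal x) * (∑ b ∈ s, frobN (X b) + t) := by
  have hD : frobN (diagonal x) = ∑ i, x i ^ 2 := by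
    unfold frobN; simp [Matrix.trace_diagonal, sq]
  set W : Fin n → Fin n → ℝ := fun i j => if i = j then 0 else ∑ b ∈ s, X b i j ^ 2 with hWd
  have h := graph_bound W
    (fun i j => by
      simp only [hWd]; split_ifs
      · exact le_rfl
      · exact Finset.sum_nonneg fun _ _ => sq_nonneg _)
    (fun i j => by
      simp only [hWd, eq_comm (a := i) (b := j)]
      congr 1
      refine Finset.sum_congr rfl fun b _ => by rw [(hX b).apply])
    (fun i => by simp [hWd]) (∑ b ∈ s, frobN (X b)) t
    (by
      simp only [frobN_eq]
      rw [Finset.sum_comm (s := s)]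
      refine Finset.sum_le_sum fun i _ => ?_
      rw [Finset.sum_comm (s := s)]
      refine Finset.sum_le_sum fun j _ => ?_
      simp only [hWd]; split_ifs
      · exact Finset.sum_nonneg fun _ _ => sq_nonneg _
      · exact le_rfl) ht
    (fun i j hij => by
      simp only [hWd, hij, if_false]
      exact bessel s X hX ho t ht hb i j hij) x
  rw [hD, mul_comm]
  refine le_trans (le_of_eq ?_) h
  simp only [frobN_eq]
  rw [Finset.sum_comm]
  refine Finset.sum_congr rfl fun i _ => ?_
  rw [Finset.sum_comm]
  refine Finset.sum_congr rfl fun j _ => ?_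
  simp only [hWd, Matrix.sub_apply, Matrix.diagonal_mul, Matrix.mul_diagonal]
  split_ifs with hij
  · subst hij; simp [mul_comm]
  · rw [Finset.sum_mul]
    refine Finset.sum_congr rfl fun b _ => by ring

lemma spectral {n : ℕ} (A : Matrix (Fin n) (Fin n) ℝ) (hA : A.IsSymm) :
    ∃ (U : Matrix (Fin n) (Fin n) ℝ) (x : Fin n → ℝ),
      Uᵀ * U = 1 ∧ U * Uᵀ = 1 ∧ Uᵀ * A * U = diagonal x := by
  have hH : A.IsHermitian := by
    rw [Matrix.IsHermitian, Matrix.conjTranspose_eq_transpose_of_trivial]; exact hA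
  have h1 := Matrix.mem_unitaryGroup_iff.mp hH.eigenvectorUnitary.2
  have h2 := Matrix.mem_unitaryGroup_iff'.mp hH.eigenvectorUnitary.2
  have h3 := hH.spectral_theorem
  rw [Unitary.conjStarAlgAut_apply] at h3
  simp only [Matrix.star_eq_conjTranspose, Matrix.conjTranspose_eq_transpose_of_trivial] at h1 h2 h3
  set U : Matrix (Fin n) (Fin n) ℝ := hH.eigenvectorUnitary.1 with hU
  refine ⟨U, hH.eigenvalues, h2, h1, ?_⟩
  have h4 : A = U * diagonal hH.eigenvalues * Uᵀ := h3
  calc Uᵀ * A * U = Uᵀ * (U * diagonal hH.eigenvalues * Uᵀ) * U := by rw [← h4]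
    _ = (Uᵀ * U) * diagonal hH.eigenvalues * (Uᵀ * U) := by simp only [Matrix.mul_assoc]
    _ = _ := by rw [h2]; simp

lemma ortho_conj_mul {n : ℕ} (U : Matrix (Fin n) (Fin n) ℝ) (h : U * Uᵀ = 1)
    (X Y : Matrix (Fin n) (Fin n) ℝ) : (Uᵀ * X * U) * (Uᵀ * Y * U) = Uᵀ * (X * Y) * U := by
  calc (Uᵀ * X * U) * (Uᵀ * Y * U) = Uᵀ * X * (U * Uᵀ) * Y * U := by
        simp only [Matrix.mul_assoc]
    _ = _ := by rw [h]; simp only [Matrix.mul_assoc, Matrix.mul_one]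

lemma conj_trace {n : ℕ} (U : Matrix (Fin n) (Fin n) ℝ) (h : U * Uᵀ = 1)
    (X : Matrix (Fin n) (Fin n) ℝ) : (Uᵀ * X * U).trace = X.trace := by
  rw [Matrix.trace_mul_comm, ← Matrix.mul_assoc, h, Matrix.one_mul]

lemma conj_frobN {n : ℕ} (U : Matrix (Fin n) (Fin n) ℝ) (h : U * Uᵀ = 1)
    (X : Matrix (Fin n) (Fin n) ℝ) : frobN (Uᵀ * X * U) = frobN X := by
  unfold frobN
  have : (Uᵀ * X * U)ᵀ = Uᵀ * Xᵀ * U := by simp [Matrix.mul_assoc]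
  rw [this, ortho_conj_mul U h, conj_trace U h]

lemma key {n : ℕ} {ι : Type*} [DecidableEq ι] (s : Finset ι)
    (X : ι → Matrix (Fin n) (Fin n) ℝ) (A : Matrix (Fin n) (Fin n) ℝ) (hA : A.IsSymm)
    (hX : ∀ b, (X b).IsSymm) (ho : ∀ b ∈ s, ∀ c ∈ s, b ≠ c → (X b * X c).trace = 0) (t : ℝ)
    (ht : 0 ≤ t) (hb : ∀ b ∈ s, frobN (X b) ≤ t) :
    ∑ b ∈ s, frobN (A * X b - X b * A) ≤ frobN A * (∑ b ∈ s, frobN (X b) + t) := by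
  obtain ⟨U, x, -, hU, hx⟩ := spectral A hA
  have h := key_diag s (fun b => Uᵀ * X b * U) x
    (fun b => by
      have := (hX b).eq
      simp [Matrix.IsSymm, Matrix.mul_assoc, this])
    (fun b hb c hc hbc => by
      rw [ortho_conj_mul U hU, conj_trace U hU]; exact ho b hb c hc hbc) t ht
    (fun b hbs => by rw [conj_frobN U hU]; exact hb b hbs)
  simp only [← hx, ortho_conj_mul U hU, conj_frobN U hU, ← Matrix.mul_sub, ← Matrix.sub_mul] at h
  exact h

lemma orth_case {n p : ℕ} (hp : 2 ≤ p) (A : Fin p → Matrix (Fin n) (Fin n) ℝ)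
    (hA : ∀ α, (A α).IsSymm) (ho : ∀ b c, b ≠ c → (A b * A c).trace = 0) :
    (∑ α, ∑ β, frobN (A α * A β - A β * A α)) +
      (∑ α, ∑ β, ((A α * A β).trace) ^ 2) ≤
    (3 / 2 : ℝ) * (∑ α, frobN (A α)) ^ 2 := by
  have : Nonempty (Fin p) := ⟨⟨0, by omega⟩⟩
  obtain ⟨a0, ha0⟩ := Finite.exists_max (fun α => frobN (A α))
  set S := ∑ α, frobN (A α) with hS
  set m := frobN (A a0) with hm
  have hN := fun α => frobN_nonneg (A α)
  have hsub : ∀ α, ∑ b ∈ Finset.univ.erase α, frobN (A b) = S - frobN (A α) := fun α => by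
    rw [hS, ← Finset.add_sum_erase _ _ (Finset.mem_univ α)]; ring
  have hmS : 0 ≤ S - m := by
    rw [hm, ← hsub]; exact Finset.sum_nonneg fun _ _ => hN _
  have h1 : ∀ α, ∑ β, frobN (A α * A β - A β * A α)
      ≤ frobN (A α) * (S - frobN (A α) + m) + if α = a0 then m * (S - m - m) else 0 := by
    intro α
    rw [← Finset.add_sum_erase _ _ (Finset.mem_univ α)]
    have hz : frobN (A α * A α - A α * A α) = 0 := by simp [frobN]
    rw [hz, zero_add]
    split_ifs with hα
    · subst hα
      have := key (Finset.univ.erase α) A (A α) (hA α) hA (fun b _ c _ h => ho b c h) (S - m) hmS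
        (fun b hb => by
          rw [hm, ← hsub]
          exact Finset.single_le_sum (f := fun b => frobN (A b)) (fun _ _ => hN _) hb)
      rw [hsub] at this
      refine this.trans (le_of_eq ?_)
      rw [← hm]; ring
    · have := key (Finset.univ.erase α) A (A α) (hA α) hA (fun b _ c _ h => ho b c h) m (hN a0)
        (fun b hb => ha0 b)
      rw [hsub] at this
      linarith
  have h2 : ∀ α, ∑ β, ((A α * A β).trace) ^ 2 = frobN (A α) ^ 2 := by
    intro α
    rw [Finset.sum_eq_single_of_mem α (Finset.mem_univ _)]
    · unfold frobN; rw [(hA α).eq]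
    · intro b _ hb
      rw [ho α b hb.symm]; simp
  rw [← Finset.sum_add_distrib]
  have h3 : ∑ α, (∑ β, frobN (A α * A β - A β * A α) + ∑ β, ((A α * A β).trace) ^ 2)
      ≤ ∑ α, (frobN (A α) * (S + m) + if α = a0 then m * (S - m - m) else 0) := by
    refine Finset.sum_le_sum fun α _ => ?_
    rw [h2]
    have := h1 α
    linarith
  rw [Finset.sum_add_distrib (f := fun α => frobN (A α) * (S + m)), ← Finset.sum_mul, ← hS] at h3
  simp only [Finset.sum_ite_eq', Finset.mem_univ, if_true] at h3
  nlinarith [sq_nonneg (S - 2 * m)]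

/-- Orthogonal change of frame. -/
noncomputable def mixFam {n p : ℕ} (U : Matrix (Fin p) (Fin p) ℝ)
    (A : Fin p → Matrix (Fin n) (Fin n) ℝ) (c : Fin p) : Matrix (Fin n) (Fin n) ℝ :=
  ∑ a, U a c • A a

lemma mix_sq {n p : ℕ} (U : Matrix (Fin p) (Fin p) ℝ) (hU : U * Uᵀ = 1)
    (A : Fin p → Matrix (Fin n) (Fin n) ℝ) (l : Matrix (Fin n) (Fin n) ℝ →ₗ[ℝ] ℝ) :
    ∑ c, l (mixFam U A c) ^ 2 = ∑ a, l (A a) ^ 2 := by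
  set v : Fin p → ℝ := fun a => l (A a) with hv
  have h1 : ∀ c, l (mixFam U A c) = (v ᵥ* U) c := by
    intro c
    simp [mixFam, Matrix.vecMul, dotProduct, hv, mul_comm]
  simp only [h1]
  have h2 : (v ᵥ* U) ⬝ᵥ (v ᵥ* U) = v ⬝ᵥ v := by
    have : v ᵥ* U = Uᵀ *ᵥ v := (Matrix.mulVec_transpose U v).symm
    nth_rewrite 2 [this]
    rw [Matrix.dotProduct_mulVec, Matrix.vecMul_vecMul, hU, Matrix.vecMul_one]
  simpa [dotProduct, sq] using h2

lemma mix_frob {n p : ℕ} (U : Matrix (Fin p) (Fin p) ℝ) (hU : U * Uᵀ = 1)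
    (A : Fin p → Matrix (Fin n) (Fin n) ℝ)
    (l : Matrix (Fin n) (Fin n) ℝ →ₗ[ℝ] Matrix (Fin n) (Fin n) ℝ) :
    ∑ c, frobN (l (mixFam U A c)) = ∑ a, frobN (l (A a)) := by
  simp only [frobN_eq]
  rw [Finset.sum_comm, Finset.sum_comm (s := Finset.univ (α := Fin p))]
  refine Finset.sum_congr rfl fun i _ => ?_
  rw [Finset.sum_comm, Finset.sum_comm (s := Finset.univ (α := Fin p))]
  refine Finset.sum_congr rfl fun j _ => ?_
  exact mix_sq U hU A ((Matrix.entryLinearMap ℝ ℝ i j).comp l)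

theorem li_li_lemma {n p : ℕ} (hp : 2 ≤ p) (A : Fin p → Matrix (Fin n) (Fin n) ℝ)
    (hA : ∀ α, (A α).IsSymm) :
    (∑ α, ∑ β, frobN (A α * A β - A β * A α)) +
      (∑ α, ∑ β, ((A α * A β).trace) ^ 2) ≤
    (3 / 2 : ℝ) * (∑ α, frobN (A α)) ^ 2 := by
  obtain ⟨U, x, -, hU, hx⟩ := spectral (Matrix.of fun a b => (A a * A b).trace)
    (by ext a b; simp [Matrix.trace_mul_comm (A a)])
  have h := orth_case hp (mixFam U A)
    (fun c => by simp [Matrix.IsSymm, mixFam, Matrix.transpose_sum, (hA _).eq])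
    (fun b c hbc => by
      have h1 := congrFun (congrFun hx b) c
      rw [Matrix.diagonal_apply_ne _ hbc] at h1
      rw [← h1]
      simp only [mixFam, Matrix.mul_apply (M := Uᵀ * _), Matrix.mul_apply (M := Uᵀ),
        Finset.sum_mul, Finset.mul_sum, Matrix.trace_sum, Matrix.transpose_apply,
        Matrix.of_apply, Matrix.smul_mul, Matrix.mul_smul, Matrix.trace_smul, smul_eq_mul]
      exact Finset.sum_congr rfl fun i _ => Finset.sum_congr rfl fun j _ => by ring)
  have r1 : ∑ α, frobN (mixFam U A α) = ∑ α, frobN (A α) := mix_frob U hU A LinearMap.id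
  have s1 : ∀ Y, ∑ β, frobN (Y * mixFam U A β - mixFam U A β * Y)
      = ∑ β, frobN (Y * A β - A β * Y) := fun Y =>
    mix_frob U hU A (LinearMap.mulLeft ℝ Y - LinearMap.mulRight ℝ Y)
  have s2 : ∀ Y, ∑ β, frobN (mixFam U A β * Y - Y * mixFam U A β)
      = ∑ β, frobN (A β * Y - Y * A β) := fun Y =>
    mix_frob U hU A (LinearMap.mulRight ℝ Y - LinearMap.mulLeft ℝ Y)
  have t1 : ∀ Y, ∑ β, (Y * mixFam U A β).trace ^ 2 = ∑ β, (Y * A β).trace ^ 2 := fun Y =>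
    mix_sq U hU A ((Matrix.traceLinearMap (Fin n) ℝ ℝ).comp (LinearMap.mulLeft ℝ Y))
  have t2 : ∀ Y, ∑ β, (mixFam U A β * Y).trace ^ 2 = ∑ β, (A β * Y).trace ^ 2 := fun Y =>
    mix_sq U hU A ((Matrix.traceLinearMap (Fin n) ℝ ℝ).comp (LinearMap.mulRight ℝ Y))
  have r2 : ∑ α, ∑ β, frobN (mixFam U A α * mixFam U A β - mixFam U A β * mixFam U A α)
      = ∑ α, ∑ β, frobN (A α * A β - A β * A α) := by
    simp only [s1]
    rw [Finset.sum_comm]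
    simp only [s2]
    rw [Finset.sum_comm]
  have r3 : ∑ α, ∑ β, (mixFam U A α * mixFam U A β).trace ^ 2
      = ∑ α, ∑ β, (A α * A β).trace ^ 2 := by
    simp only [t1]
    rw [Finset.sum_comm]
    simp only [t2]
    rw [Finset.sum_comm]
  rw [r1, r2, r3] at h
  exact h
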